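/- A valid schedule certified by a matching valid interval assignment is 4-approximate: let the machine types satisfy c_k = 2^k, strictly increasing capacities B_k ∈ ℤ≥1, and 2^k/B_k ≥ 2^{k+1}/B_{k+1} for all k. Let 𝒳 be a valid schedule of a finite instance J such that there exists a family {(I_X, t(X), S_X)}_{X∈𝒳}, with one tuple per batch X of 𝒳 whose type component equals the type t(X) of that batch, forming a valid interval assignment for J. Then cost(𝒳) ≤ 4·OPT(J). -/

import Mathlib

structure SchedInstance where
  jobs : Finset ℕ
  r : ℕ → ℤ
  d : ℕ → ℤ
  window : ∀ j ∈ jobs, r j ≤ d j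

structure Batch where
  btype : ℕ
  time : ℤ
  bjobs : Finset ℕ
deriving DecidableEq

def ValidSchedule (B : ℕ → ℕ) (P : SchedInstance) (S : Finset Batch) : Prop :=
  (∀ X ∈ S, X.bjobs.card ≤ B X.btype) ∧
  (∀ X ∈ S, ∀ j ∈ X.bjobs, j ∈ P.jobs ∧ P.r j ≤ X.time ∧ X.time ≤ P.d j) ∧
  (∀ X ∈ S, ∀ Y ∈ S, X ≠ Y → Disjoint X.bjobs Y.bjobs) ∧
  (∀ j ∈ P.jobs, ∃ X ∈ S, j ∈ X.bjobs)

noncomputable def schedCost (c : ℕ → ℝ) (S : Finset Batch) : ℝ :=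
  ∑ X ∈ S, c X.btype

noncomputable def OPT (c : ℕ → ℝ) (B : ℕ → ℕ) (P : SchedInstance) : ℝ :=
  sInf {x : ℝ | ∃ S : Finset Batch, ValidSchedule B P S ∧ schedCost c S = x}

structure IAItem where
  lo : ℤ
  hi : ℤ
  itype : ℕ
  ijobs : Finset ℕ
deriving DecidableEq

def ValidAssignment (B : ℕ → ℕ) (P : SchedInstance) (A : Finset IAItem) : Prop :=
  (∀ e ∈ A, if e.itype = 0 then e.ijobs.card = 1 else e.ijobs.card = B (e.itype - 1)) ∧
  (∀ e ∈ A, ∀ j ∈ e.ijobs, j ∈ P.jobs ∧ e.lo ≤ P.r j ∧ P.d j ≤ e.hi) ∧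
  (∀ e ∈ A, ∀ e' ∈ A, e ≠ e' → e.itype = e'.itype →
      Set.Icc e.lo e.hi ∩ Set.Icc e'.lo e'.hi = ∅) ∧
  (∀ e ∈ A, ∀ e' ∈ A, e ≠ e' → Disjoint e.ijobs e'.ijobs)

/-!
Spread the cost of every tuple evenly over its jobs and charge each job's share to the batch of a
competing schedule that runs it. A batch `Y` of type `k` is charged in two ways.

* Tuples of type at most `k` that share a job with `Y` contain the execution time of `Y`, so there
  is at most one of each type, and together they charge at most `c 0 + ⋯ + c k ≤ a * c k`.
* In a tuple of type `t > k`, which has `B (t - 1)` jobs, every job pays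
  `c t / B (t - 1) ≤ b * (c (t - 1) / B (t - 1)) ≤ b * (c k / B k)`, and `Y` has at most `B k` jobs.

For `c k = β ^ k` one can take `a = β / (β - 1)` and `b = β`; the ratio `a + b` is least at `β = 2`.
-/

section

open Finset

/-- The total cost of an interval assignment, each tuple paying for one machine of its type. -/
noncomputable def assignmentCost (c : ℕ → ℝ) (A : Finset IAItem) : ℝ :=
  ∑ e ∈ A, c e.itype

namespace IAItem

/-- The share of a tuple's cost carried by each of its jobs (`0` for a tuple without jobs). -/
noncomputable def jobShare (c : ℕ → ℝ) (e : IAItem) : ℝ :=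
  c e.itype / #e.ijobs

/-- The charge that a tuple puts on a set `T` of jobs: the shares of its jobs in `T`. -/
noncomputable def chargeOn (c : ℕ → ℝ) (e : IAItem) (T : Finset ℕ) : ℝ :=
  #(e.ijobs ∩ T) * e.jobShare c

variable {c : ℕ → ℝ} {e : IAItem} {T : Finset ℕ}

lemma card_mul_jobShare (he : e.ijobs.Nonempty) : #e.ijobs * e.jobShare c = c e.itype :=
  mul_div_cancel₀ _ (Nat.cast_ne_zero.mpr he.card_ne_zero)

lemma chargeOn_le (hc : 0 ≤ c e.itype) (he : e.ijobs.Nonempty) :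
    e.chargeOn c T ≤ c e.itype :=
  calc e.chargeOn c T ≤ #e.ijobs * e.jobShare c :=
        mul_le_mul_of_nonneg_right (mod_cast card_le_card inter_subset_left)
          (div_nonneg hc (Nat.cast_nonneg _))
    _ = c e.itype := card_mul_jobShare he

end IAItem

variable {B : ℕ → ℕ} {c : ℕ → ℝ} {a b : ℝ} {P : SchedInstance}

lemma exists_validSchedule (hB : 1 ≤ B 0) (P : SchedInstance) :
    ∃ S : Finset Batch, ValidSchedule B P S := by
  refine ⟨P.jobs.image fun j => ⟨0, P.r j, {j}⟩, ?_, ?_, ?_, ?_⟩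
  · simpa [forall_mem_image] using fun _ _ => hB
  · simpa +contextual [forall_mem_image] using P.window
  · simp only [forall_mem_image, disjoint_singleton]
    rintro i - j - hne rfl
    exact hne rfl
  · exact fun j hj => ⟨_, mem_image_of_mem _ hj, mem_singleton_self j⟩

lemma ValidSchedule.sum_card_inter_bjobs {S : Finset Batch} (hS : ValidSchedule B P S)
    {J : Finset ℕ} (hJ : J ⊆ P.jobs) : ∑ Y ∈ S, #(J ∩ Y.bjobs) = #J := by
  obtain ⟨-, -, hdisj, hcover⟩ := hS
  rw [← card_biUnion fun X hX Y hY hne =>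
    (hdisj X hX Y hY hne).mono inter_subset_right inter_subset_right, ← inter_biUnion,
    inter_eq_left.mpr fun j hj => mem_biUnion.mpr (hcover j (hJ hj))]

lemma ValidSchedule.sum_chargeOn {S : Finset Batch} (hS : ValidSchedule B P S) {e : IAItem}
    (he : e.ijobs.Nonempty) (hJ : e.ijobs ⊆ P.jobs) :
    ∑ Y ∈ S, e.chargeOn c Y.bjobs = c e.itype := by
  simp only [IAItem.chargeOn]
  rw [← sum_mul, ← Nat.cast_sum, hS.sum_card_inter_bjobs hJ, IAItem.card_mul_jobShare he]

namespace ValidAssignment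

variable {A : Finset IAItem}

lemma ijobs_nonempty (hA : ValidAssignment B P A) (hB : ∀ k, 1 ≤ B k) {e : IAItem} (he : e ∈ A) :
    e.ijobs.Nonempty := by
  have hcard := hA.1 e he
  rw [← card_pos]
  split_ifs at hcard
  · exact hcard ▸ one_pos
  · exact hcard ▸ hB _

lemma injOn_itype (hA : ValidAssignment B P A) (τ : ℤ) :
    Set.InjOn IAItem.itype {e | e ∈ A ∧ τ ∈ Set.Icc e.lo e.hi} := by
  rintro e ⟨he, hτ⟩ e' ⟨he', hτ'⟩ htype
  by_contra hne
  exact (hA.2.2.1 e he e' he' hne htype).subset ⟨hτ, hτ'⟩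

lemma mem_Icc_of_chargeOn_ne_zero (hA : ValidAssignment B P A) {e : IAItem} (he : e ∈ A)
    {T : Finset ℕ} {τ : ℤ} (hT : ∀ j ∈ T, P.r j ≤ τ ∧ τ ≤ P.d j) (h : e.chargeOn c T ≠ 0) :
    τ ∈ Set.Icc e.lo e.hi := by
  obtain ⟨j, hj⟩ : (e.ijobs ∩ T).Nonempty :=
    card_ne_zero.mp (Nat.cast_ne_zero.mp (left_ne_zero_of_mul h))
  obtain ⟨hje, hjT⟩ := mem_inter.mp hj
  obtain ⟨-, hlo, hhi⟩ := hA.2.1 e he j hje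
  exact ⟨hlo.trans (hT j hjT).1, (hT j hjT).2.trans hhi⟩

lemma sum_chargeOn_filter_itype_le (hA : ValidAssignment B P A) (hB : ∀ k, 1 ≤ B k)
    (hc : ∀ k, 0 ≤ c k) {T : Finset ℕ} {τ : ℤ} (hT : ∀ j ∈ T, P.r j ≤ τ ∧ τ ≤ P.d j) (k : ℕ) :
    ∑ e ∈ A with e.itype ≤ k, e.chargeOn c T ≤ ∑ t ∈ range (k + 1), c t := by
  set L := {e ∈ A | e.itype ≤ k} with hL
  have hLA : L ⊆ A := filter_subset _ _
  have hinj : Set.InjOn IAItem.itype ↑{e ∈ L | τ ∈ Set.Icc e.lo e.hi} :=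
    (hA.injOn_itype τ).mono fun e he => (mem_filter.mp he).imp_left (@hLA e)
  calc ∑ e ∈ L, e.chargeOn c T
      = ∑ e ∈ L with τ ∈ Set.Icc e.lo e.hi, e.chargeOn c T :=
        (sum_filter_of_ne fun e he => hA.mem_Icc_of_chargeOn_ne_zero (hLA he) hT).symm
    _ ≤ ∑ e ∈ L with τ ∈ Set.Icc e.lo e.hi, c e.itype :=
        sum_le_sum fun e he =>
          IAItem.chargeOn_le (hc _) (hA.ijobs_nonempty hB (hLA (mem_filter.mp he).1))
    _ = ∑ t ∈ image IAItem.itype {e ∈ L | τ ∈ Set.Icc e.lo e.hi}, c t := (sum_image hinj).symm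
    _ ≤ ∑ t ∈ range (k + 1), c t := by
        refine sum_le_sum_of_subset_of_nonneg (image_subset_iff.mpr fun e he => ?_)
          fun t _ _ => hc t
        simp only [hL, mem_filter] at he
        exact mem_range_succ_iff.mpr he.1.2

lemma jobShare_le_of_lt_itype (hA : ValidAssignment B P A) (hb : ∀ k, c (k + 1) ≤ b * c k)
    (hb0 : 0 ≤ b) (hanti : Antitone fun k => c k / B k) {e : IAItem} (he : e ∈ A) {k : ℕ}
    (hk : k < e.itype) : e.jobShare c ≤ b * (c k / B k) := by
  obtain ⟨t, ht⟩ := Nat.exists_eq_succ_of_ne_zero hk.ne_zero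
  have hcard : #e.ijobs = B t := by simpa [ht] using hA.1 e he
  calc e.jobShare c = c (t + 1) / B t := by rw [IAItem.jobShare, hcard, ht]
    _ ≤ b * c t / B t := div_le_div_of_nonneg_right (hb t) (Nat.cast_nonneg _)
    _ = b * (c t / B t) := mul_div_assoc _ _ _
    _ ≤ b * (c k / B k) := mul_le_mul_of_nonneg_left (hanti (by omega)) hb0

lemma sum_card_ijobs_inter_le (hA : ValidAssignment B P A) (T : Finset ℕ) :
    ∑ e ∈ A, #(e.ijobs ∩ T) ≤ #T := by
  rw [← card_biUnion fun e he e' he' hne =>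
    (hA.2.2.2 e he e' he' hne).mono inter_subset_left inter_subset_left]
  exact card_le_card (biUnion_subset.mpr fun _ _ => inter_subset_right)

lemma sum_chargeOn_filter_lt_itype_le (hA : ValidAssignment B P A) (hB : ∀ k, 1 ≤ B k)
    (hc : ∀ k, 0 ≤ c k) (hb : ∀ k, c (k + 1) ≤ b * c k) (hb0 : 0 ≤ b)
    (hanti : Antitone fun k => c k / B k) {T : Finset ℕ} {k : ℕ} (hT : #T ≤ B k) :
    ∑ e ∈ A with k < e.itype, e.chargeOn c T ≤ b * c k := by
  have hcard : ∑ e ∈ A with k < e.itype, #(e.ijobs ∩ T) ≤ B k :=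
    (sum_le_sum_of_subset (filter_subset _ _)).trans ((hA.sum_card_ijobs_inter_le T).trans hT)
  have hBk : (B k : ℝ) ≠ 0 := Nat.cast_ne_zero.mpr (Nat.one_le_iff_ne_zero.mp (hB k))
  calc ∑ e ∈ A with k < e.itype, e.chargeOn c T
      ≤ ∑ e ∈ A with k < e.itype, #(e.ijobs ∩ T) * (b * (c k / B k)) :=
        sum_le_sum fun e he => mul_le_mul_of_nonneg_left
          (hA.jobShare_le_of_lt_itype hb hb0 hanti (mem_filter.mp he).1 (mem_filter.mp he).2)
          (Nat.cast_nonneg _)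
    _ = (∑ e ∈ A with k < e.itype, #(e.ijobs ∩ T) : ℕ) * (b * (c k / B k)) := by
        rw [← sum_mul, Nat.cast_sum]
    _ ≤ B k * (b * (c k / B k)) :=
        mul_le_mul_of_nonneg_right (mod_cast hcard)
          (mul_nonneg hb0 (div_nonneg (hc k) (Nat.cast_nonneg _)))
    _ = b * c k := by field_simp

lemma sum_chargeOn_le (hA : ValidAssignment B P A) (hB : ∀ k, 1 ≤ B k) (hc : ∀ k, 0 ≤ c k)
    (ha : ∀ k, ∑ t ∈ range (k + 1), c t ≤ a * c k) (hb : ∀ k, c (k + 1) ≤ b * c k) (hb0 : 0 ≤ b)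
    (hanti : Antitone fun k => c k / B k) {T : Finset ℕ} {τ : ℤ}
    (hT : ∀ j ∈ T, P.r j ≤ τ ∧ τ ≤ P.d j) {k : ℕ} (hTk : #T ≤ B k) :
    ∑ e ∈ A, e.chargeOn c T ≤ (a + b) * c k := by
  have hlow := (hA.sum_chargeOn_filter_itype_le hB hc hT k).trans (ha k)
  have hhigh := hA.sum_chargeOn_filter_lt_itype_le hB hc hb hb0 hanti hTk
  rw [← sum_filter_add_sum_filter_not A fun e => e.itype ≤ k, add_mul]
  simpa only [not_le] using add_le_add hlow hhigh

theorem assignmentCost_le_mul_schedCost (hA : ValidAssignment B P A) (hB : ∀ k, 1 ≤ B k)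
    (hc : ∀ k, 0 ≤ c k) (ha : ∀ k, ∑ t ∈ range (k + 1), c t ≤ a * c k)
    (hb : ∀ k, c (k + 1) ≤ b * c k) (hb0 : 0 ≤ b) (hanti : Antitone fun k => c k / B k)
    {S : Finset Batch} (hS : ValidSchedule B P S) :
    assignmentCost c A ≤ (a + b) * schedCost c S :=
  calc assignmentCost c A = ∑ e ∈ A, ∑ Y ∈ S, e.chargeOn c Y.bjobs :=
        sum_congr rfl fun e he =>
          (hS.sum_chargeOn (hA.ijobs_nonempty hB he) fun j hj => (hA.2.1 e he j hj).1).symm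
    _ = ∑ Y ∈ S, ∑ e ∈ A, e.chargeOn c Y.bjobs := sum_comm
    _ ≤ ∑ Y ∈ S, (a + b) * c Y.btype :=
        sum_le_sum fun Y hY =>
          hA.sum_chargeOn_le hB hc ha hb hb0 hanti (fun j hj => (hS.2.1 Y hY j hj).2) (hS.1 Y hY)
    _ = (a + b) * schedCost c S := (mul_sum _ _ _).symm

end ValidAssignment

theorem certified_schedule_four_approx_general (hB : ∀ k, 1 ≤ B k) (hc : ∀ k, 0 < c k)
    (ha : ∀ k, ∑ t ∈ range (k + 1), c t ≤ a * c k) (hb : ∀ k, c (k + 1) ≤ b * c k)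
    (hanti : ∀ k, c (k + 1) / B (k + 1) ≤ c k / B k)
    {A : Finset IAItem} (hA : ValidAssignment B P A) :
    assignmentCost c A ≤ (a + b) * OPT c B P := by
  have ha0 : 0 < a :=
    pos_of_mul_pos_left ((sum_pos (fun t _ => hc t) nonempty_range_add_one).trans_le (ha 0))
      (hc 0).le
  have hb0 : 0 < b := pos_of_mul_pos_left ((hc 1).trans_le (hb 0)) (hc 0).le
  obtain ⟨S₀, hS₀⟩ := exists_validSchedule (hB 0) P
  rw [← div_le_iff₀' (add_pos ha0 hb0)]
  refine le_csInf ⟨_, S₀, hS₀, rfl⟩ ?_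
  rintro _ ⟨S, hS, rfl⟩
  rw [div_le_iff₀' (add_pos ha0 hb0)]
  exact hA.assignmentCost_le_mul_schedCost hB (fun k => (hc k).le) ha hb hb0.le
    (antitone_nat_of_succ_le hanti) hS

lemma sum_range_succ_two_pow_le (k : ℕ) : ∑ t ∈ range (k + 1), (2 : ℝ) ^ t ≤ 2 * 2 ^ k := by
  rw [geom_sum_eq (by norm_num), pow_succ']
  norm_num

end

/-- a valid schedule `𝒳` certified by a matching valid interval
assignment — one tuple per batch, the tuple's type equal to the batch's type — is
4-approximate: `cost 𝒳 ≤ 4 · OPT`. -/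
theorem certified_schedule_four_approx
    (B : ℕ → ℕ) (hB1 : ∀ k, 1 ≤ B k) (hBmono : StrictMono B)
    (hcpj : ∀ k, (2 : ℝ) ^ (k + 1) / (B (k + 1) : ℝ) ≤ (2 : ℝ) ^ k / (B k : ℝ))
    (P : SchedInstance) (𝒳 : Finset Batch) (h𝒳 : ValidSchedule B P 𝒳)
    (lo hi : Batch → ℤ) (sj : Batch → Finset ℕ)
    (hinj : Set.InjOn (fun Y => IAItem.mk (lo Y) (hi Y) Y.btype (sj Y)) ↑𝒳)
    (hval : ValidAssignment B P
      (𝒳.image fun Y => IAItem.mk (lo Y) (hi Y) Y.btype (sj Y))) :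
    schedCost (fun k => (2 : ℝ) ^ k) 𝒳 ≤ 4 * OPT (fun k => (2 : ℝ) ^ k) B P := by
  calc schedCost (fun k => (2 : ℝ) ^ k) 𝒳
      = assignmentCost (fun k => (2 : ℝ) ^ k)
          (𝒳.image fun Y => IAItem.mk (lo Y) (hi Y) Y.btype (sj Y)) := by
        rw [assignmentCost, schedCost, Finset.sum_image hinj]
    _ ≤ (2 + 2) * OPT (fun k => (2 : ℝ) ^ k) B P :=
        certified_schedule_four_approx_general hB1 (fun k => by positivity)
          sum_range_succ_two_pow_le (fun k => (pow_succ' 2 k).le) hcpj hval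
    _ = 4 * OPT (fun k => (2 : ℝ) ^ k) B P := by norm_num
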